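/- Let R be a commutative ring, m, N, k natural numbers with k ≤ N, and U an m×m matrix over R. Let φ_U be the R-algebra endomorphism of the polynomial ring R[X_{(r,s)} : r ∈ Fin N, s ∈ Fin m] determined by X_{(r,i)} ↦ Σ_{j} U_{j,i} X_{(r,j)}. Then for any tuple (i₁,…,i_k) of elements of Fin m, φ_U(S(i₁,…,i_k)) = Σ_{j₁ < j₂ < … < j_k} det(U(j|i)) · S(j₁,…,j_k), where the sum is over strictly increasing k-tuples j from Fin m and U(j|i) is the k×k submatrix of U with rows j₁,…,j_k and columns i₁,…,i_k. -/

import Mathlib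

open scoped BigOperators

/-- The Slater operator `S(i₁,…,i_k)` in the variables `X (r, s)`, `(r, s) ∈ Fin N × Fin m`:
the determinant of the `k × k` matrix whose `(r,c)` entry is `X (r, i c)`. -/
noncomputable def slaterOp (R : Type*) [CommRing R] {N m k : ℕ} (hk : k ≤ N)
    (i : Fin k → Fin m) : MvPolynomial (Fin N × Fin m) R :=
  (Matrix.of fun r c : Fin k => MvPolynomial.X (Fin.castLE hk r, i c)).det

/-- The algebra endomorphism `φ_U` determined by `X (r, i) ↦ Σ_j U_{j,i} X (r, j)`. -/
noncomputable def phiU {R : Type*} [CommRing R] {N m : ℕ} (U : Matrix (Fin m) (Fin m) R) :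
    MvPolynomial (Fin N × Fin m) R →ₐ[R] MvPolynomial (Fin N × Fin m) R :=
  MvPolynomial.aeval fun v : Fin N × Fin m =>
    ∑ j : Fin m, MvPolynomial.C (U j v.2) * MvPolynomial.X (v.1, j)

open Classical in
theorem cauchyBinet_aux {S : Type*} [CommRing S] {m k : ℕ}
    (A : Matrix (Fin k) (Fin m) S) (B : Matrix (Fin m) (Fin k) S) :
    (A * B).det = ∑ j ∈ Finset.univ.filter (fun j : Fin k → Fin m => StrictMono j),
      (B.submatrix j id).det * (A.submatrix id j).det := by
  have h1 : (A * B).det = ∑ f : Fin k → Fin m, (∏ c, B (f c) c) * (A.submatrix id f).det := by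
    simp only [Matrix.det_apply', Matrix.mul_apply, Finset.prod_univ_sum, Fintype.piFinset_univ,
      Finset.mul_sum, Matrix.submatrix_apply, id]
    rw [Finset.sum_comm]
    refine Finset.sum_congr rfl fun f _ => Finset.sum_congr rfl fun σ _ => ?_
    rw [Finset.prod_mul_distrib]; ring
  have h2 : ∑ f : Fin k → Fin m, (∏ c, B (f c) c) * (A.submatrix id f).det =
      ∑ f ∈ Finset.univ.filter (fun f : Fin k → Fin m => Function.Injective f),
        (∏ c, B (f c) c) * (A.submatrix id f).det := by
    symm
    refine Finset.sum_subset (Finset.filter_subset _ _) fun f _ hf => ?_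
    have hf' : ¬ Function.Injective f := fun h => hf (by simpa using h)
    rw [Function.not_injective_iff] at hf'
    obtain ⟨a, b, hab, hne⟩ := hf'
    rw [Matrix.det_zero_of_column_eq hne (by intro r; simp [hab]), mul_zero]
  rw [h1, h2]
  have h3 : ∀ j : Fin k → Fin m, (B.submatrix j id).det * (A.submatrix id j).det =
      ∑ σ : Equiv.Perm (Fin k), (∏ c, B (j (σ c)) c) * (A.submatrix id (j ∘ σ)).det := by
    intro j
    rw [Matrix.det_apply', Finset.sum_mul]
    refine Finset.sum_congr rfl fun σ _ => ?_
    have := Matrix.det_permute' σ (A.submatrix id j)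
    rw [Matrix.submatrix_submatrix] at this
    simp only [Function.comp_id] at this
    rw [this]
    simp only [Matrix.submatrix_apply, id]
    ring
  rw [Finset.sum_congr rfl fun j _ => h3 j, ← Finset.sum_product']
  symm
  refine Finset.sum_bij (fun p _ => p.1 ∘ p.2) ?_ ?_ ?_ ?_
  · rintro ⟨j, σ⟩ h
    simp only [Finset.mem_product, Finset.mem_filter, Finset.mem_univ, true_and, and_true] at h ⊢
    exact h.injective.comp σ.injective
  · rintro ⟨j, σ⟩ h ⟨j', σ'⟩ h' e
    simp only [Finset.mem_product, Finset.mem_filter, Finset.mem_univ, true_and, and_true] at h h' e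
    have hr : Set.range j = Set.range j' := by
      rw [← σ.surjective.range_comp j, e, σ'.surjective.range_comp]
    have hj : j = j' := (StrictMono.range_inj h h').1 hr
    subst hj
    have : σ = σ' := Equiv.ext fun x => h.injective (congrFun e x)
    rw [this]
  · intro f hf
    simp only [Finset.mem_filter, Finset.mem_univ, true_and] at hf
    refine ⟨(f ∘ Tuple.sort f, (Tuple.sort f)⁻¹), ?_, ?_⟩
    · simp only [Finset.mem_product, Finset.mem_filter, Finset.mem_univ, true_and, and_true]
      exact (Tuple.monotone_sort f).strictMono_of_injective (hf.comp (Tuple.sort f).injective)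
    · funext x; simp
  · rintro ⟨j, σ⟩ _
    rfl

open Classical in
/-- The action of a visible unitary on a Slater operator:
`φ_U(S(i)) = Σ_{j₁<⋯<j_k} det(U(j|i)) · S(j)`. -/
theorem stmt7 {R : Type*} [CommRing R] {N m k : ℕ} (hk : k ≤ N)
    (U : Matrix (Fin m) (Fin m) R) (i : Fin k → Fin m) :
    phiU (N := N) U (slaterOp R hk i) =
      ∑ j ∈ Finset.univ.filter (fun j : Fin k → Fin m => StrictMono j),
        MvPolynomial.C (U.submatrix j i).det * slaterOp R hk j := by
  have key := cauchyBinet_aux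
    (Matrix.of fun (r : Fin k) (s : Fin m) =>
      (MvPolynomial.X (Fin.castLE hk r, s) : MvPolynomial (Fin N × Fin m) R))
    (Matrix.of fun (s : Fin m) (c : Fin k) =>
      (MvPolynomial.C (U s (i c)) : MvPolynomial (Fin N × Fin m) R))
  have hL : phiU (N := N) U (slaterOp R hk i) = ((Matrix.of fun (r : Fin k) (s : Fin m) =>
      (MvPolynomial.X (Fin.castLE hk r, s) : MvPolynomial (Fin N × Fin m) R)) *
    (Matrix.of fun (s : Fin m) (c : Fin k) =>
      (MvPolynomial.C (U s (i c)) : MvPolynomial (Fin N × Fin m) R))).det := by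
    rw [slaterOp, AlgHom.map_det]
    congr 1
    ext1 r c
    simp only [AlgHom.mapMatrix_apply, Matrix.map_apply, Matrix.of_apply, Matrix.mul_apply, phiU,
      MvPolynomial.aeval_X]
    exact Finset.sum_congr rfl fun _ _ => mul_comm _ _
  rw [hL, key]
  refine Finset.sum_congr rfl fun j _ => ?_
  rw [RingHom.map_det]
  rfl
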